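/- For general points, if 2d ≥ 11n and n ≥ 1, then ℓ(L(d, d−1, 6^n)) = 2d − 11n. Since v(L(d, d−1, 6^n)) = 2d − 21n, this system is special. -/

import Mathlib

open MvPolynomial

/-- The iterated partial derivative corresponding to the multi-index `ν`. -/
noncomputable def mderiv (ν : Fin 3 → ℕ) :
    MvPolynomial (Fin 3) ℂ →ₗ[ℂ] MvPolynomial (Fin 3) ℂ :=
  ((pderiv (R := ℂ) (0 : Fin 3)).toLinearMap ^ ν 0) ∘ₗ
  ((pderiv (R := ℂ) (1 : Fin 3)).toLinearMap ^ ν 1) ∘ₗ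
  ((pderiv (R := ℂ) (2 : Fin 3)).toLinearMap ^ ν 2)

/-- The linear system `L(d; m)` of homogeneous forms of degree `d` in three variables
all of whose partial derivatives of order `< m i` vanish at the point `p i`,
i.e. plane curves of degree `d` with multiplicity at least `m i` at `p i`. -/
noncomputable def linSys {k : ℕ} (p : Fin k → Fin 3 → ℂ) (d : ℕ) (m : Fin k → ℕ) :
    Submodule ℂ (MvPolynomial (Fin 3) ℂ) :=
  (homogeneousSubmodule (Fin 3) ℂ d) ⊓
    ⨅ (i : Fin k), ⨅ (ν : Fin 3 → ℕ), ⨅ (_ : ν 0 + ν 1 + ν 2 < m i),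
      LinearMap.ker ((aeval (p i)).toLinearMap ∘ₗ mderiv ν)

/-- The projective dimension `ℓ` of the linear system (`-1` means empty). -/
noncomputable def projDim {k : ℕ} (p : Fin k → Fin 3 → ℂ) (d : ℕ) (m : Fin k → ℕ) : ℤ :=
  (Module.finrank ℂ (linSys p d m) : ℤ) - 1

/-- The virtual dimension `v = d(d+3)/2 - ∑ mᵢ(mᵢ+1)/2`. -/
def virtDim {k : ℕ} (d : ℕ) (m : Fin k → ℕ) : ℤ :=
  ((d : ℤ) * (d + 3)) / 2 - ∑ i : Fin k, ((m i : ℤ) * (m i + 1)) / 2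

/-- The quasi-homogeneous multiplicity vector `(m₀, 6, …, 6)` on `n + 1` points. -/
def qh (n m0 : ℕ) : Fin (n + 1) → ℕ := fun i => if i = 0 then m0 else 6

/-- A property `Q` of configurations of `k` points of `ℙ²` (given by nonzero homogeneous
coordinate vectors) holds for points in general position: there is a nonzero polynomial
in the coordinates such that `Q` holds whenever it does not vanish. -/
def Generically (k : ℕ) (Q : (Fin k → Fin 3 → ℂ) → Prop) : Prop :=
  ∃ P : MvPolynomial (Fin k × Fin 3) ℂ, P ≠ 0 ∧
    ∀ p : Fin k → Fin 3 → ℂ, (∀ i, p i ≠ 0) →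
      eval (fun x => p x.1 x.2) P ≠ 0 → Q p

/-!
The line through `p 0` and `p i` meets a curve of `L(d, d - 1, m₁, …, mₙ)` in
`(d - 1) + mᵢ = d + (mᵢ - 1)` points, so it splits off, and it does so `mᵢ - 1` times. The residual
system is `L(e + 1, e, 1ⁿ)` with `e + 1 = d - ∑ (mᵢ - 1)`. With `p 0` at the vertex `(0, 0, 1)` the
forms of degree `e + 1` and multiplicity `e` there are the monoidal forms `Z A + B`, where `A` and
`B` are binary forms in `X, Y` of degrees `e` and `e + 1`; they make up a space of dimension
`2 e + 3`. The `n` simple points impose independent conditions on it, because at the points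
`(x, 1, x ^ (e + 2))` the values of the monomial basis form a Vandermonde matrix. The multiplicity
`mᵢ` thus costs only `2 mᵢ - 1` conditions instead of the expected `mᵢ (mᵢ + 1) / 2`.
-/

section Restriction

variable {σ R : Type*} [CommSemiring R]

/-- The translate `F (X + p)` of a polynomial `F`; its coefficients are the Taylor coefficients
of `F` at `p`. -/
noncomputable def taylorShift (p : σ → R) : MvPolynomial σ R →ₐ[R] MvPolynomial σ R :=
  aeval fun i => X i + C (p i)

theorem pderiv_taylorShift (p : σ → R) (i : σ) (F : MvPolynomial σ R) :
    pderiv i (taylorShift p F) = taylorShift p (pderiv i F) := by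
  induction F using MvPolynomial.induction_on with
  | C a => simp [taylorShift, algebraMap_eq]
  | add f g hf hg => simp [hf, hg]
  | mul_X f j hf =>
    have hX : pderiv i (taylorShift p (X j)) = taylorShift p (pderiv i (X j)) := by
      classical simp [taylorShift, pderiv_X, Pi.single_apply]
    simp only [map_mul, Derivation.leibniz, smul_eq_mul, map_add, hf, hX]

theorem iterate_pderiv_taylorShift (p : σ → R) (i : σ) (k : ℕ) (F : MvPolynomial σ R) :
    (pderiv i)^[k] (taylorShift p F) = taylorShift p ((pderiv i)^[k] F) :=
  (Function.Semiconj.iterate_right (fun G => (pderiv_taylorShift p i G).symm) k F).symm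

theorem constantCoeff_taylorShift (p : σ → R) (F : MvPolynomial σ R) :
    constantCoeff (taylorShift p F) = eval p F := by
  suffices constantCoeff.comp (taylorShift p : _ →+* MvPolynomial σ R) = eval p from
    DFunLike.congr_fun this F
  ext <;> simp [taylorShift, algebraMap_eq]

theorem coeff_iterate_pderiv (i : σ) (k : ℕ) (s : σ →₀ ℕ) (F : MvPolynomial σ R) :
    coeff s ((pderiv i)^[k] F) = (s i + 1).ascFactorial k * coeff (s + Finsupp.single i k) F := by
  induction k generalizing F with
  | zero => simp
  | succ k ih =>
    rw [Function.iterate_succ_apply, ih, coeff_pderiv, add_assoc, ← Finsupp.single_add,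
      Nat.ascFactorial_succ]
    simp only [Finsupp.add_apply, Finsupp.single_eq_same]
    push_cast
    ring

/-- The restriction `F (p + v T)` of a polynomial `F` to the line through `p` with direction
`v`. -/
noncomputable def lineRestrict (p v : σ → R) : MvPolynomial σ R →ₐ[R] Polynomial R :=
  aeval fun i => Polynomial.C (p i) + Polynomial.C (v i) * Polynomial.X

theorem eval_lineRestrict (p v : σ → R) (F : MvPolynomial σ R) (t : R) :
    (lineRestrict p v F).eval t = eval (p + t • v) F := by
  suffices (Polynomial.evalRingHom t).comp (lineRestrict p v : _ →+* Polynomial R) =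
      eval (p + t • v) from DFunLike.congr_fun this F
  ext <;> simp [lineRestrict, Polynomial.algebraMap_eq, mul_comm t]

theorem lineRestrict_taylorShift (p v : σ → R) (F : MvPolynomial σ R) :
    lineRestrict 0 v (taylorShift p F) = lineRestrict p v F := by
  suffices (lineRestrict 0 v).comp (taylorShift p) = lineRestrict p v from
    DFunLike.congr_fun this F
  ext i : 1
  simp [lineRestrict, taylorShift, add_comm]

theorem lineRestrict_rename {τ : Type*} (f : τ → σ) (p v : σ → R) (F : MvPolynomial τ R) :
    lineRestrict p v (rename f F) = lineRestrict (p ∘ f) (v ∘ f) F :=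
  aeval_rename f _ F

theorem lineRestrict_bind₁_toMvPolynomial {τ : Type*} [Fintype τ] (A : Matrix σ τ R)
    (p v : τ → R) (F : MvPolynomial σ R) :
    lineRestrict p v (bind₁ A.toMvPolynomial F) =
      lineRestrict (A.mulVec p) (A.mulVec v) F := by
  suffices (lineRestrict p v).comp (bind₁ A.toMvPolynomial) =
      lineRestrict (A.mulVec p) (A.mulVec v) from DFunLike.congr_fun this F
  ext i : 1
  simp [Matrix.toMvPolynomial, lineRestrict, aeval_monomial, Matrix.mulVec, dotProduct,
    Polynomial.algebraMap_eq, mul_add, Finset.sum_add_distrib, Finset.sum_mul, mul_assoc]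

theorem lineRestrict_zero_of_isHomogeneous {F : MvPolynomial σ R} {d : ℕ} (hF : F.IsHomogeneous d)
    (v : σ → R) : lineRestrict 0 v F = Polynomial.C (eval v F) * Polynomial.X ^ d := by
  rw [lineRestrict, aeval_def, eval₂_eq, eval_eq, map_sum, Finset.sum_mul]
  refine Finset.sum_congr rfl fun s hs => ?_
  have hd : ∑ i ∈ s.support, s i = d := by
    simpa [Finsupp.weight_apply, Finsupp.sum] using hF (mem_support_iff.1 hs)
  simp [mul_pow, Finset.prod_mul_distrib, Finset.prod_pow_eq_pow_sum, hd, mul_assoc,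
    Polynomial.algebraMap_eq]

theorem coeff_lineRestrict (p v : σ → R) (F : MvPolynomial σ R) (k : ℕ) :
    (lineRestrict p v F).coeff k = eval v (homogeneousComponent k (taylorShift p F)) := by
  rw [← lineRestrict_taylorShift]
  generalize taylorShift p F = G
  conv_lhs => rw [← sum_homogeneousComponent G]
  simp only [map_sum, Polynomial.finsetSum_coeff, Polynomial.coeff_C_mul_X_pow,
    lineRestrict_zero_of_isHomogeneous (homogeneousComponent_isHomogeneous _ G),
    Finset.sum_ite_eq, Finset.mem_range]
  split_ifs with h
  · rfl
  · rw [homogeneousComponent_eq_zero _ _ (by omega), map_zero]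

end Restriction

section Multiplicity

variable {F G : MvPolynomial (Fin 3) ℂ} {p : Fin 3 → ℂ} {m n : ℕ}

theorem mderiv_apply (ν : Fin 3 → ℕ) (F : MvPolynomial (Fin 3) ℂ) :
    mderiv ν F = (pderiv 0)^[ν 0] ((pderiv 1)^[ν 1] ((pderiv 2)^[ν 2] F)) := by
  simp [mderiv, Module.End.pow_apply]

theorem mderiv_taylorShift (p : Fin 3 → ℂ) (ν : Fin 3 → ℕ) (F : MvPolynomial (Fin 3) ℂ) :
    mderiv ν (taylorShift p F) = taylorShift p (mderiv ν F) := by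
  simp only [mderiv_apply, iterate_pderiv_taylorShift]

theorem coeff_mderiv (ν s : Fin 3 →₀ ℕ) (F : MvPolynomial (Fin 3) ℂ) :
    coeff s (mderiv ν F) = (∏ i, ((s i + 1).ascFactorial (ν i) : ℂ)) * coeff (s + ν) F := by
  have hν : s + Finsupp.single 0 (ν 0) + Finsupp.single 1 (ν 1) + Finsupp.single 2 (ν 2) =
      s + ν := by
    ext i
    fin_cases i <;> simp
  simp [mderiv_apply, coeff_iterate_pderiv, hν, Fin.prod_univ_three, mul_assoc]

theorem eval_mderiv (ν : Fin 3 →₀ ℕ) (p : Fin 3 → ℂ) (F : MvPolynomial (Fin 3) ℂ) :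
    eval p (mderiv ν F) = (∏ i, ((ν i).factorial : ℂ)) * coeff ν (taylorShift p F) := by
  rw [← constantCoeff_taylorShift, ← mderiv_taylorShift, constantCoeff_eq, coeff_mderiv]
  simp [Nat.one_ascFactorial]

/-- The form `F` has multiplicity at least `m` at `p`: all its partial derivatives of order `< m`
vanish there. -/
def HasMult (F : MvPolynomial (Fin 3) ℂ) (p : Fin 3 → ℂ) (m : ℕ) : Prop :=
  ∀ ν : Fin 3 → ℕ, ν 0 + ν 1 + ν 2 < m → eval p (mderiv ν F) = 0

theorem mem_linSys {k d : ℕ} {p : Fin k → Fin 3 → ℂ} {m : Fin k → ℕ} :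
    F ∈ linSys p d m ↔ F.IsHomogeneous d ∧ ∀ i, HasMult F (p i) (m i) := by
  simp [linSys, HasMult, Submodule.mem_iInf, mem_homogeneousSubmodule, aeval_eq_eval]

theorem hasMult_iff_coeff_taylorShift :
    HasMult F p m ↔ ∀ s : Fin 3 →₀ ℕ, s.degree < m → coeff s (taylorShift p F) = 0 := by
  have eval_eq_zero_iff (s : Fin 3 →₀ ℕ) :
      eval p (mderiv s F) = 0 ↔ coeff s (taylorShift p F) = 0 := by
    simp [eval_mderiv, Finset.prod_eq_zero_iff, Nat.factorial_ne_zero]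
  rw [HasMult, Finsupp.equivFunOnFinite.symm.forall_congr_left]
  simp only [← eval_eq_zero_iff, Finsupp.degree_eq_sum, Fin.sum_univ_three]
  rfl

theorem hasMult_iff_lineRestrict :
    HasMult F p m ↔ ∀ v, Polynomial.X ^ m ∣ lineRestrict p v F := by
  simp only [hasMult_iff_coeff_taylorShift, Polynomial.X_pow_dvd_iff, coeff_lineRestrict]
  constructor
  · intro h v k hk
    have hcomponent : homogeneousComponent k (taylorShift p F) = 0 := by
      ext s
      rw [coeff_homogeneousComponent, coeff_zero]
      split_ifs with hs
      exacts [h s (hs ▸ hk), rfl]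
    rw [hcomponent, map_zero]
  · intro h s hs
    have hcomponent : homogeneousComponent s.degree (taylorShift p F) = 0 :=
      MvPolynomial.funext fun v => by simpa using h v _ hs
    simpa [coeff_homogeneousComponent] using congrArg (coeff s) hcomponent

theorem hasMult_zero (F : MvPolynomial (Fin 3) ℂ) (p : Fin 3 → ℂ) : HasMult F p 0 :=
  fun _ hν => absurd hν (Nat.not_lt_zero _)

theorem hasMult_one_iff : HasMult F p 1 ↔ eval p F = 0 := by
  simp [hasMult_iff_coeff_taylorShift, ← constantCoeff_taylorShift, constantCoeff_eq,
    Finsupp.degree_eq_zero_iff]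

namespace HasMult

theorem mono (h : HasMult F p n) (hmn : m ≤ n) : HasMult F p m :=
  fun ν hν => h ν (hν.trans_le hmn)

theorem add (hF : HasMult F p m) (hG : HasMult G p m) : HasMult (F + G) p m :=
  fun ν hν => by rw [map_add, map_add, hF ν hν, hG ν hν, add_zero]

theorem sub (hF : HasMult F p m) (hG : HasMult G p m) : HasMult (F - G) p m :=
  fun ν hν => by rw [map_sub, map_sub, hF ν hν, hG ν hν, sub_zero]

theorem mul (hF : HasMult F p m) (hG : HasMult G p n) : HasMult (F * G) p (m + n) := by
  rw [hasMult_iff_lineRestrict] at *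
  intro v
  rw [map_mul, pow_add]
  exact mul_dvd_mul (hF v) (hG v)

theorem pow (hF : HasMult F p m) (k : ℕ) : HasMult (F ^ k) p (m * k) := by
  rw [hasMult_iff_lineRestrict] at *
  intro v
  rw [map_pow, pow_mul]
  exact pow_dvd_pow_of_dvd (hF v) k

theorem pderiv (hF : HasMult F p (m + 1)) (i : Fin 3) : HasMult (pderiv i F) p m := by
  rw [hasMult_iff_coeff_taylorShift] at *
  intro s hs
  rw [← pderiv_taylorShift, coeff_pderiv, hF _ (by simpa using hs), zero_mul]

end HasMult

theorem hasMult_bind₁_toMvPolynomial_iff {A : Matrix (Fin 3) (Fin 3) ℂ} (hA : IsUnit A.det) :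
    HasMult (bind₁ A.toMvPolynomial F) p m ↔ HasMult F (A.mulVec p) m := by
  simp only [hasMult_iff_lineRestrict, lineRestrict_bind₁_toMvPolynomial]
  exact ((Matrix.mulVec_surjective_iff_isUnit.2 ((Matrix.isUnit_iff_isUnit_det A).2 hA)).forall
    (p := fun v => Polynomial.X ^ m ∣ lineRestrict (A.mulVec p) v F)).symm

end Multiplicity

section LinearChange

theorem isHomogeneous_bind₁_toMvPolynomial {σ τ R : Type*} [Fintype τ] [CommSemiring R]
    (A : Matrix σ τ R) {F : MvPolynomial σ R} {d : ℕ} (hF : F.IsHomogeneous d) :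
    (bind₁ A.toMvPolynomial F).IsHomogeneous d := by
  simpa using hF.aeval _ A.toMvPolynomial_isHomogeneous

/-- The invertible linear change of variables given by the matrix `A`. -/
noncomputable def linearChange {σ R : Type*} [Fintype σ] [DecidableEq σ] [CommRing R]
    (A : Matrix σ σ R) (hA : IsUnit A.det) : MvPolynomial σ R ≃ₐ[R] MvPolynomial σ R :=
  AlgEquiv.ofAlgHom (bind₁ A.toMvPolynomial) (bind₁ A⁻¹.toMvPolynomial)
    (by ext i : 1; simp [← Matrix.toMvPolynomial_mul, Matrix.nonsing_inv_mul A hA])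
    (by ext i : 1; simp [← Matrix.toMvPolynomial_mul, Matrix.mul_nonsing_inv A hA])

theorem linearChange_mem_linSys_iff {A : Matrix (Fin 3) (Fin 3) ℂ} (hA : IsUnit A.det) {k d : ℕ}
    {p : Fin k → Fin 3 → ℂ} {m : Fin k → ℕ} {F : MvPolynomial (Fin 3) ℂ} :
    linearChange A hA F ∈ linSys p d m ↔ F ∈ linSys (fun i => A.mulVec (p i)) d m := by
  have isHomogeneous_iff : (linearChange A hA F).IsHomogeneous d ↔ F.IsHomogeneous d := by
    refine ⟨fun h => ?_, isHomogeneous_bind₁_toMvPolynomial A⟩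
    rw [← (linearChange A hA).symm_apply_apply F]
    exact isHomogeneous_bind₁_toMvPolynomial A⁻¹ h
  simp only [mem_linSys, isHomogeneous_iff, ← hasMult_bind₁_toMvPolynomial_iff hA]
  rfl

theorem finrank_linSys_mulVec {A : Matrix (Fin 3) (Fin 3) ℂ} (hA : IsUnit A.det) {k : ℕ}
    (p : Fin k → Fin 3 → ℂ) (d : ℕ) (m : Fin k → ℕ) :
    Module.finrank ℂ (linSys (fun i => A.mulVec (p i)) d m) =
      Module.finrank ℂ (linSys p d m) := by
  have hcomap : linSys (fun i => A.mulVec (p i)) d m =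
      (linSys p d m).comap (linearChange A hA).toLinearMap :=
    Submodule.ext fun F => (linearChange_mem_linSys_iff hA).symm
  rw [hcomap]
  exact ((linearChange A hA).toLinearEquiv.ofSubmodule' _).finrank_eq

end LinearChange

section BinaryForms

variable {R : Type*} [CommSemiring R] {k l : ℕ} {a b : Polynomial R}

/-- The binary form of degree `k` in `X 0` and `X 1` whose dehomogenization at `X 1 = 1` is `a`,
regarded as a ternary form; the terms of `a` of degree `> k` are dropped. -/
noncomputable def binForm (k : ℕ) : Polynomial R →ₗ[R] MvPolynomial (Fin 3) R :=
  (rename Fin.castSucc).toLinearMap ∘ₗ Polynomial.homogenizeLM k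

theorem binForm_apply (k : ℕ) (a : Polynomial R) :
    binForm k a = rename Fin.castSucc (a.homogenize k) := rfl

theorem isHomogeneous_binForm (k : ℕ) (a : Polynomial R) : (binForm k a).IsHomogeneous k :=
  a.isHomogeneous_homogenize.rename_isHomogeneous

theorem binForm_X_pow {j : ℕ} (hj : j ≤ k) :
    binForm k (Polynomial.X ^ j : Polynomial R) = X 0 ^ j * X 1 ^ (k - j) := by
  simp [binForm_apply, Polynomial.homogenize_X_pow hj]

theorem binForm_mul (ha : a.natDegree ≤ k) (hb : b.natDegree ≤ l) :
    binForm (k + l) (a * b) = binForm k a * binForm l b := by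
  simp only [binForm_apply, Polynomial.homogenize_mul a b ha hb, map_mul]

theorem binForm_pow (ha : a.natDegree ≤ k) (j : ℕ) :
    binForm (k * j) (a ^ j) = binForm k a ^ j := by
  have := Polynomial.homogenize_finsetProd (s := Finset.range j) (p := fun _ => a)
    (n := fun _ => k) fun _ _ => ha
  simp only [Finset.prod_const, Finset.card_range, Finset.sum_const, smul_eq_mul] at this
  rw [binForm_apply, mul_comm, this, map_pow, binForm_apply]

theorem binForm_eq_zero_iff (ha : a.natDegree ≤ k) : binForm k a = 0 ↔ a = 0 := by
  rw [binForm_apply, map_eq_zero_iff _ (rename_injective _ (Fin.castSucc_injective 2)),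
    Polynomial.homogenize_eq_zero_iff ha]

theorem pderiv_two_binForm (k : ℕ) (a : Polynomial R) : pderiv 2 (binForm k a) = 0 := by
  refine pderiv_eq_zero_of_notMem_vars fun h => ?_
  obtain ⟨i, -, hi⟩ := mem_vars_rename _ _ h
  exact (Fin.castSucc_lt_last i).ne hi

theorem eval_binForm {K : Type*} [Semifield K] {a : Polynomial K} (ha : a.natDegree ≤ k)
    {w : Fin 3 → K} (hw : w 1 ≠ 0) :
    eval w (binForm k a) = a.eval (w 0 / w 1) * w 1 ^ k := by
  rw [binForm_apply, eval_rename, Polynomial.eval_homogenize ha _ hw]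
  rfl

end BinaryForms

section BinaryFormMultiplicity

variable {k m : ℕ} {a : Polynomial ℂ} {p : Fin 3 → ℂ}

theorem hasMult_binForm_vertex (k : ℕ) (a : Polynomial ℂ) (c : ℂ) :
    HasMult (binForm k a) (Pi.single 2 c) k := by
  have hvertex : Pi.single 2 c ∘ Fin.castSucc = (0 : Fin 2 → ℂ) := by
    ext i
    fin_cases i <;> simp
  rw [hasMult_iff_lineRestrict]
  intro v
  rw [binForm_apply, lineRestrict_rename, hvertex,
    lineRestrict_zero_of_isHomogeneous a.isHomogeneous_homogenize]
  exact dvd_mul_left _ _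

theorem lineRestrict_binForm (ha : a.natDegree ≤ k) (hp : p 1 ≠ 0) :
    lineRestrict p ![p 1, 0, 0] (binForm k a) =
      Polynomial.C (p 1 ^ k) * a.comp (Polynomial.X + Polynomial.C (p 0 / p 1)) := by
  refine Polynomial.funext fun t => ?_
  rw [eval_lineRestrict, eval_binForm ha (by simpa using hp)]
  simp [add_div, mul_div_cancel_right₀ _ hp, add_comm, mul_comm]

theorem hasMult_binForm_iff (ha : a.natDegree ≤ k) (hp : p 1 ≠ 0) :
    HasMult (binForm k a) p m ↔ (Polynomial.X - Polynomial.C (p 0 / p 1)) ^ m ∣ a := by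
  constructor
  · intro h
    have hdvd := hasMult_iff_lineRestrict.1 h ![p 1, 0, 0]
    rwa [lineRestrict_binForm ha hp, (Polynomial.isUnit_C.2 (pow_ne_zero k hp).isUnit).dvd_mul_left,
      ← Polynomial.X_sub_C_pow_dvd_iff] at hdvd
  · rintro ⟨q, rfl⟩
    rcases eq_or_ne q 0 with rfl | hq
    · simp [HasMult]
    have hdeg := Polynomial.natDegree_X_sub_C_le (p 0 / p 1)
    have hline : HasMult (binForm 1 (Polynomial.X - Polynomial.C (p 0 / p 1))) p 1 := by
      rw [hasMult_one_iff, eval_binForm hdeg hp]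
      simp
    rw [Polynomial.natDegree_mul (pow_ne_zero m (Polynomial.X_sub_C_ne_zero _)) hq,
      Polynomial.natDegree_pow, Polynomial.natDegree_X_sub_C, mul_one] at ha
    obtain ⟨l, rfl⟩ := Nat.exists_eq_add_of_le (le_of_add_le_left ha)
    have hbin : binForm (m + l) ((Polynomial.X - Polynomial.C (p 0 / p 1)) ^ m * q) =
        binForm 1 (Polynomial.X - Polynomial.C (p 0 / p 1)) ^ m * binForm l q := by
      rw [← binForm_pow hdeg, one_mul,
        binForm_mul (by simp) (Nat.le_of_add_le_add_left ha)]
    simpa [hbin] using (hline.pow m).mul (hasMult_zero _ p)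

end BinaryFormMultiplicity

section MonoidForms

variable {R : Type*} [CommSemiring R] {k l : ℕ} {a b : Polynomial R}

/-- The monoidal form `Z A + B` of degree `k + 1`, where the binary forms `A` of degree `k` and `B`
of degree `k + 1` have dehomogenizations `a` and `b`. -/
noncomputable def monoidForm (k : ℕ) :
    Polynomial R × Polynomial R →ₗ[R] MvPolynomial (Fin 3) R :=
  LinearMap.coprod (LinearMap.mulLeft R (X 2) ∘ₗ binForm k) (binForm (k + 1))

theorem monoidForm_apply (k : ℕ) (a b : Polynomial R) :
    monoidForm k (a, b) = X 2 * binForm k a + binForm (k + 1) b := by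
  simp [monoidForm]

theorem isHomogeneous_monoidForm (k : ℕ) (a b : Polynomial R) :
    (monoidForm k (a, b)).IsHomogeneous (k + 1) := by
  rw [monoidForm_apply]
  refine IsHomogeneous.add ?_ (isHomogeneous_binForm _ _)
  rw [add_comm k]
  exact (isHomogeneous_X R 2).mul (isHomogeneous_binForm _ _)

theorem monoidForm_mul {D : Polynomial R} (hD : D.natDegree ≤ l) (ha : a.natDegree ≤ k)
    (hb : b.natDegree ≤ k + 1) :
    monoidForm (l + k) (D * a, D * b) = binForm l D * monoidForm k (a, b) := by
  rw [monoidForm_apply, monoidForm_apply, binForm_mul hD ha, add_assoc, binForm_mul hD hb]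
  ring

theorem pderiv_two_monoidForm (k : ℕ) (a b : Polynomial R) :
    pderiv 2 (monoidForm k (a, b)) = binForm k a := by
  simp [monoidForm_apply, pderiv_two_binForm]

theorem monoidForm_eq_zero_iff (ha : a.natDegree ≤ k) (hb : b.natDegree ≤ k + 1) :
    monoidForm k (a, b) = 0 ↔ a = 0 ∧ b = 0 := by
  constructor
  · intro h
    have ha0 : a = 0 := by
      rw [← binForm_eq_zero_iff ha, ← pderiv_two_monoidForm k a b, h, map_zero]
    refine ⟨ha0, (binForm_eq_zero_iff hb).1 ?_⟩
    simpa [monoidForm_apply, ha0] using h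
  · rintro ⟨rfl, rfl⟩
    exact map_zero _

theorem mem_degreeLT_succ : a ∈ Polynomial.degreeLT R (k + 1) ↔ a.natDegree ≤ k := by
  rw [Polynomial.degreeLT_succ_eq_degreeLE, Polynomial.mem_degreeLE,
    Polynomial.natDegree_le_iff_degree_le]

/-- The module of monoidal forms of degree `k + 1`: the forms `Z A + B` with `A` and `B` binary
forms of degrees `k` and `k + 1`. -/
noncomputable def monoidForms (R : Type*) [CommSemiring R] (k : ℕ) :
    Submodule R (MvPolynomial (Fin 3) R) :=
  LinearMap.range (monoidForm k ∘ₗ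
    (Polynomial.degreeLT R (k + 1)).subtype.prodMap (Polynomial.degreeLT R (k + 2)).subtype)

theorem mem_monoidForms {F : MvPolynomial (Fin 3) R} :
    F ∈ monoidForms R k ↔
      ∃ a b : Polynomial R, a.natDegree ≤ k ∧ b.natDegree ≤ k + 1 ∧ monoidForm k (a, b) = F := by
  simp only [monoidForms, LinearMap.mem_range, Prod.exists, Subtype.exists, mem_degreeLT_succ]
  constructor
  · rintro ⟨a, ha, b, hb, rfl⟩
    exact ⟨a, b, ha, hb, rfl⟩
  · rintro ⟨a, b, ha, hb, rfl⟩
    exact ⟨a, ha, b, hb, rfl⟩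

theorem finrank_monoidForms (R : Type*) [CommRing R] [Nontrivial R] (k : ℕ) :
    Module.finrank R (monoidForms R k) = 2 * k + 3 := by
  have hinj : Function.Injective (monoidForm k ∘ₗ
      (Polynomial.degreeLT R (k + 1)).subtype.prodMap
        (Polynomial.degreeLT R (k + 2)).subtype) := by
    refine (injective_iff_map_eq_zero _).2 ?_
    rintro ⟨⟨a, ha⟩, ⟨b, hb⟩⟩ h
    obtain ⟨rfl, rfl⟩ :=
      (monoidForm_eq_zero_iff (mem_degreeLT_succ.1 ha) (mem_degreeLT_succ.1 hb)).1 h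
    rfl
  rw [monoidForms, ← (LinearEquiv.ofInjective _ hinj).finrank_eq,
    ((Polynomial.degreeLTEquiv R _).prodCongr (Polynomial.degreeLTEquiv R _)).finrank_eq,
    Module.finrank_prod, Module.finrank_fin_fun, Module.finrank_fin_fun]
  ring

end MonoidForms

section MonoidFormMultiplicity

variable {k m : ℕ} {a b : Polynomial ℂ} {p : Fin 3 → ℂ}

theorem hasMult_monoidForm_vertex (k : ℕ) (a b : Polynomial ℂ) (c : ℂ) :
    HasMult (monoidForm k (a, b)) (Pi.single 2 c) k := by
  rw [monoidForm_apply]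
  refine HasMult.add ?_ ((hasMult_binForm_vertex (k + 1) b c).mono k.le_succ)
  simpa using (hasMult_zero (X 2) _).mul (hasMult_binForm_vertex k a c)

theorem hasMult_monoidForm_iff (ha : a.natDegree ≤ k) (hb : b.natDegree ≤ k + 1) (hp : p 1 ≠ 0) :
    HasMult (monoidForm k (a, b)) p (m + 1) ↔
      (Polynomial.X - Polynomial.C (p 0 / p 1)) ^ m ∣ a ∧
      (Polynomial.X - Polynomial.C (p 0 / p 1)) ^ (m + 1) ∣
        b + Polynomial.C (p 2 / p 1) * a := by
  set r := b + Polynomial.C (p 2 / p 1) * a with hr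
  have hr_deg : r.natDegree ≤ k + 1 := Polynomial.natDegree_add_le_of_degree_le hb
    ((Polynomial.natDegree_C_mul_le _ _).trans (ha.trans k.le_succ))
  -- `Z A + B = (B + s Y A) + (Z - s Y) A` with `s = p 2 / p 1`, and `Z - s Y` vanishes at `p`
  have hsplit : monoidForm k (a, b) =
      binForm (k + 1) r + (X 2 - C (p 2 / p 1) * X 1) * binForm k a := by
    have hY : binForm (k + 1) a = X 1 * binForm k a := by
      have := binForm_mul (k := 1) (a := 1) (by simp) ha
      rwa [one_mul, add_comm, ← pow_zero Polynomial.X, binForm_X_pow zero_le_one, pow_zero,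
        one_mul, tsub_zero, pow_one] at this
    rw [monoidForm_apply, hr, map_add, ← Polynomial.smul_eq_C_mul, map_smul, hY, smul_eq_C_mul]
    ring
  have hline : HasMult (X 2 - C (p 2 / p 1) * X 1) p 1 := by
    simp [hasMult_one_iff, hp]
  rw [← hasMult_binForm_iff ha hp, ← hasMult_binForm_iff hr_deg hp]
  constructor
  · intro h
    have hA : HasMult (binForm k a) p m := by
      simpa [pderiv_two_monoidForm] using h.pderiv 2
    refine ⟨hA, ?_⟩
    rw [eq_sub_of_add_eq hsplit.symm]
    exact h.sub (add_comm m 1 ▸ hline.mul hA)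
  · rintro ⟨hA, hB⟩
    rw [hsplit]
    exact hB.add (add_comm m 1 ▸ hline.mul hA)

end MonoidFormMultiplicity

section Vertex

theorem degree_eq_of_isHomogeneous {σ R : Type*} [CommSemiring R] {F : MvPolynomial σ R} {d : ℕ}
    (hF : F.IsHomogeneous d) {s : σ →₀ ℕ} (hs : s ∈ F.support) : s.degree = d :=
  by_contra fun h => mem_support_iff.1 hs (hF.coeff_eq_zero h)

theorem eval_single_of_isHomogeneous {σ R : Type*} [DecidableEq σ] [CommSemiring R]
    {F : MvPolynomial σ R} {d : ℕ} (hF : F.IsHomogeneous d) (i : σ) (c : R) :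
    eval (Pi.single i c) F = coeff (Finsupp.single i d) F * c ^ d := by
  rw [eval_eq, Finset.sum_eq_single (Finsupp.single i d)]
  · rcases eq_or_ne d 0 with rfl | hd
    · simp
    · simp [Finsupp.support_single, hd]
  · intro s hs hne
    obtain ⟨j, hj, hji⟩ : ∃ j ∈ s.support, j ≠ i := by
      by_contra! h
      have hsingle : s = Finsupp.single i (s i) := Finsupp.support_subset_singleton.1
        fun j hj => Finset.mem_singleton.2 (h j hj)
      refine hne (hsingle.trans ?_)
      rw [← degree_eq_of_isHomogeneous hF hs, hsingle]
      simp
    rw [Finset.prod_eq_zero hj, mul_zero]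
    rw [Pi.single_eq_of_ne hji, zero_pow (Finsupp.mem_support_iff.1 hj)]
  · intro h
    rw [notMem_support_iff.1 h, zero_mul]

theorem monomial_fin_three {R : Type*} [CommSemiring R] (s : Fin 3 →₀ ℕ) (c : R) :
    monomial s c = C c * X 0 ^ s 0 * X 1 ^ s 1 * X 2 ^ s 2 := by
  rw [monomial_eq, Finsupp.prod_fintype _ _ (by simp), Fin.prod_univ_three]
  ring

theorem mem_monoidForms_of_isHomogeneous {R : Type*} [CommSemiring R]
    {F : MvPolynomial (Fin 3) R} {k : ℕ} (hF : F.IsHomogeneous (k + 1))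
    (hZ : ∀ s ∈ F.support, s 2 ≤ 1) : F ∈ monoidForms R k := by
  rw [F.as_sum]
  refine Submodule.sum_mem _ fun s hs => ?_
  have hs_deg := degree_eq_of_isHomogeneous hF hs
  rw [Finsupp.degree_eq_sum, Fin.sum_univ_three] at hs_deg
  obtain hs2 | hs2 : s 2 = 0 ∨ s 2 = 1 := by have := hZ s hs; omega
  · refine mem_monoidForms.2 ⟨0, Polynomial.C (coeff s F) * Polynomial.X ^ s 0, by simp,
      (Polynomial.natDegree_C_mul_X_pow_le _ _).trans (by omega), ?_⟩
    rw [monoidForm_apply, map_zero (binForm _), ← Polynomial.smul_eq_C_mul, map_smul,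
      binForm_X_pow (by omega), monomial_fin_three, hs2, show k + 1 - s 0 = s 1 by omega]
    simp [smul_eq_C_mul, mul_assoc]
  · refine mem_monoidForms.2 ⟨Polynomial.C (coeff s F) * Polynomial.X ^ s 0, 0,
      (Polynomial.natDegree_C_mul_X_pow_le _ _).trans (by omega), by simp, ?_⟩
    rw [monoidForm_apply, map_zero (binForm _), ← Polynomial.smul_eq_C_mul, map_smul,
      binForm_X_pow (by omega), monomial_fin_three, hs2, show k - s 0 = s 1 by omega,
      smul_eq_C_mul]
    ring

theorem isHomogeneous_iterate_pderiv {σ R : Type*} [CommSemiring R] {F : MvPolynomial σ R} {d : ℕ}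
    (hF : F.IsHomogeneous d) (i : σ) (j : ℕ) : ((pderiv i)^[j] F).IsHomogeneous (d - j) := by
  induction j with
  | zero => simpa using hF
  | succ j ih =>
    rw [Function.iterate_succ_apply', ← Nat.sub_sub]
    exact ih.pderiv

theorem isHomogeneous_mderiv {F : MvPolynomial (Fin 3) ℂ} {d : ℕ} (hF : F.IsHomogeneous d)
    (ν : Fin 3 → ℕ) : (mderiv ν F).IsHomogeneous (d - ∑ i, ν i) := by
  have := isHomogeneous_iterate_pderiv (isHomogeneous_iterate_pderiv
    (isHomogeneous_iterate_pderiv hF 2 (ν 2)) 1 (ν 1)) 0 (ν 0)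
  rw [mderiv_apply, Fin.sum_univ_three]
  convert this using 1
  omega

theorem le_of_hasMult_vertex {F : MvPolynomial (Fin 3) ℂ} {d k : ℕ} {c : ℂ} (hc : c ≠ 0)
    (hF : F.IsHomogeneous d) (h : HasMult F (Pi.single 2 c) k) {s : Fin 3 →₀ ℕ}
    (hs : s ∈ F.support) : k + s 2 ≤ d := by
  have hd := degree_eq_of_isHomogeneous hF hs
  rw [Finsupp.degree_eq_sum, Fin.sum_univ_three] at hd
  by_contra! hlt
  set ν : Fin 3 →₀ ℕ := s.erase 2
  have hν_sum : ∑ i, ν i = s 0 + s 1 := by simp [ν, Fin.sum_univ_three]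
  have hs_eq : Finsupp.single 2 (d - ∑ i, ν i) + ν = s := by
    rw [hν_sum, show d - (s 0 + s 1) = s 2 by omega]
    exact Finsupp.single_add_erase 2 s
  have hν := h ν (by rw [← Fin.sum_univ_three, hν_sum]; omega)
  rw [eval_single_of_isHomogeneous (isHomogeneous_mderiv hF ν), coeff_mderiv, hs_eq] at hν
  simp [hc, mem_support_iff.1 hs, Finset.prod_eq_zero_iff, (Nat.ascFactorial_pos _ _).ne'] at hν

theorem mem_monoidForms_iff_hasMult {F : MvPolynomial (Fin 3) ℂ} {k : ℕ} {c : ℂ} (hc : c ≠ 0) :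
    F ∈ monoidForms ℂ k ↔ F.IsHomogeneous (k + 1) ∧ HasMult F (Pi.single 2 c) k := by
  constructor
  · rw [mem_monoidForms]
    rintro ⟨a, b, -, -, rfl⟩
    exact ⟨isHomogeneous_monoidForm k a b, hasMult_monoidForm_vertex k a b c⟩
  · rintro ⟨hF, h⟩
    exact mem_monoidForms_of_isHomogeneous hF fun s hs =>
      Nat.le_of_add_le_add_left (le_of_hasMult_vertex hc hF h hs)

end Vertex

section RootProd

variable {K : Type*} [Field K] {n : ℕ} {t : Fin n → K} {m : Fin n → ℕ}

/-- The polynomial with root `t i` of multiplicity `m i` for every `i`, which dehomogenizes the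
product of the lines `X = t i Y` taken `m i` times. -/
noncomputable def rootProd (t : Fin n → K) (m : Fin n → ℕ) : Polynomial K :=
  ∏ i, (Polynomial.X - Polynomial.C (t i)) ^ m i

theorem monic_rootProd (t : Fin n → K) (m : Fin n → ℕ) : (rootProd t m).Monic :=
  Polynomial.monic_prod_of_monic _ _ fun _ _ => (Polynomial.monic_X_sub_C _).pow _

theorem natDegree_rootProd (t : Fin n → K) (m : Fin n → ℕ) :
    (rootProd t m).natDegree = ∑ i, m i := by
  rw [rootProd, Polynomial.natDegree_prod_of_monic _ _
    fun _ _ => (Polynomial.monic_X_sub_C _).pow _]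
  simp

theorem natDegree_rootProd_mul_le {q : Polynomial K} {k : ℕ} (hq : q.natDegree ≤ k) :
    (rootProd t m * q).natDegree ≤ ∑ i, m i + k :=
  Polynomial.natDegree_mul_le_of_le (natDegree_rootProd t m).le hq

theorem rootProd_dvd (ht : Function.Injective t) {a : Polynomial K}
    (h : ∀ i, (Polynomial.X - Polynomial.C (t i)) ^ m i ∣ a) : rootProd t m ∣ a :=
  Finset.prod_dvd_of_coprime
    (fun _ _ _ _ hij => (Polynomial.pairwise_coprime_X_sub_C ht hij).pow) fun i _ => h i

theorem X_sub_C_pow_dvd_rootProd (t : Fin n → K) (m : Fin n → ℕ) (i : Fin n) :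
    (Polynomial.X - Polynomial.C (t i)) ^ m i ∣ rootProd t m :=
  Finset.dvd_prod_of_mem (fun j => (Polynomial.X - Polynomial.C (t j)) ^ m j) (Finset.mem_univ i)

theorem X_sub_C_pow_succ_dvd_rootProd_mul_iff (ht : Function.Injective t) (i : Fin n)
    {q : Polynomial K} :
    (Polynomial.X - Polynomial.C (t i)) ^ (m i + 1) ∣ rootProd t m * q ↔
      Polynomial.X - Polynomial.C (t i) ∣ q := by
  have hcoprime : IsCoprime (Polynomial.X - Polynomial.C (t i))
      (∏ j ∈ Finset.univ.erase i, (Polynomial.X - Polynomial.C (t j)) ^ m j) :=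
    IsCoprime.prod_right fun j hj =>
      (Polynomial.pairwise_coprime_X_sub_C ht (Finset.ne_of_mem_erase hj).symm).pow_right
  rw [rootProd, ← Finset.mul_prod_erase _ _ (Finset.mem_univ i), mul_assoc, pow_succ,
    mul_dvd_mul_iff_left (pow_ne_zero _ (Polynomial.X_sub_C_ne_zero _))]
  exact ⟨hcoprime.dvd_of_dvd_mul_left, fun h => h.mul_left _⟩

theorem natDegree_le_of_monic_mul {D q : Polynomial K} (hD : D.Monic) {e : ℕ}
    (h : (D * q).natDegree ≤ D.natDegree + e) : q.natDegree ≤ e := by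
  rcases eq_or_ne q 0 with rfl | hq
  · simp
  · rw [hD.natDegree_mul' hq] at h
    exact Nat.le_of_add_le_add_left h

end RootProd

section ResidualSystem

variable {n e : ℕ} {c : ℂ} {w : Fin n → Fin 3 → ℂ} {m : Fin n → ℕ}

theorem mem_linSys_cons_vertex {k : ℕ} {F : MvPolynomial (Fin 3) ℂ} (hc : c ≠ 0) :
    F ∈ linSys (Fin.cons (Pi.single 2 c) w : Fin (n + 1) → Fin 3 → ℂ) (k + 1) (Fin.cons k m) ↔
      F ∈ monoidForms ℂ k ∧ ∀ i, HasMult F (w i) (m i) := by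
  simp [mem_linSys, Fin.forall_fin_succ, mem_monoidForms_iff_hasMult hc, and_assoc]

theorem hasMult_monoidForm_rootProd_iff (hw : ∀ i, w i 1 ≠ 0)
    (ht : Function.Injective fun i => w i 0 / w i 1) {a b : Polynomial ℂ}
    (ha : a.natDegree ≤ e) (hb : b.natDegree ≤ e + 1) (i : Fin n) :
    HasMult (monoidForm (∑ i, m i + e) (rootProd (fun i => w i 0 / w i 1) m * a,
        rootProd (fun i => w i 0 / w i 1) m * b)) (w i) (m i + 1) ↔
      HasMult (monoidForm e (a, b)) (w i) 1 := by
  have hdvd := (X_sub_C_pow_dvd_rootProd (fun i => w i 0 / w i 1) m i).mul_right a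
  have hsucc := X_sub_C_pow_succ_dvd_rootProd_mul_iff ht (m := m) i
    (q := b + Polynomial.C (w i 2 / w i 1) * a)
  rw [hasMult_monoidForm_iff (natDegree_rootProd_mul_le ha) (natDegree_rootProd_mul_le hb) (hw i),
    and_iff_right hdvd, mul_left_comm, ← mul_add, hsucc, ← zero_add 1,
    hasMult_monoidForm_iff ha hb (hw i), pow_zero, and_iff_right (one_dvd a), zero_add, pow_one]

theorem monoidForm_rootProd_mem_linSys_iff (hc : c ≠ 0) (hw : ∀ i, w i 1 ≠ 0)
    (ht : Function.Injective fun i => w i 0 / w i 1) {a b : Polynomial ℂ}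
    (ha : a.natDegree ≤ e) (hb : b.natDegree ≤ e + 1) :
    monoidForm (∑ i, m i + e) (rootProd (fun i => w i 0 / w i 1) m * a,
        rootProd (fun i => w i 0 / w i 1) m * b) ∈
          linSys (Fin.cons (Pi.single 2 c) w : Fin (n + 1) → Fin 3 → ℂ) (∑ i, m i + e + 1)
            (Fin.cons (∑ i, m i + e) fun i => m i + 1) ↔
      monoidForm e (a, b) ∈
        linSys (Fin.cons (Pi.single 2 c) w : Fin (n + 1) → Fin 3 → ℂ) (e + 1)
          (Fin.cons e fun _ => 1) := by
  rw [mem_linSys_cons_vertex hc, mem_linSys_cons_vertex hc,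
    and_iff_right (mem_monoidForms.2
      ⟨_, _, natDegree_rootProd_mul_le ha, natDegree_rootProd_mul_le hb, rfl⟩),
    and_iff_right (mem_monoidForms.2 ⟨_, _, ha, hb, rfl⟩)]
  exact forall_congr' (hasMult_monoidForm_rootProd_iff hw ht ha hb)

theorem linSys_cons_vertex_eq_map (hc : c ≠ 0) (hw : ∀ i, w i 1 ≠ 0)
    (ht : Function.Injective fun i => w i 0 / w i 1) (m : Fin n → ℕ) (e : ℕ) :
    linSys (Fin.cons (Pi.single 2 c) w : Fin (n + 1) → Fin 3 → ℂ) (∑ i, m i + e + 1)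
        (Fin.cons (∑ i, m i + e) fun i => m i + 1) =
      (linSys (Fin.cons (Pi.single 2 c) w : Fin (n + 1) → Fin 3 → ℂ) (e + 1)
        (Fin.cons e fun _ => 1)).map
          (LinearMap.mulLeft ℂ (binForm (∑ i, m i) (rootProd (fun i => w i 0 / w i 1) m))) := by
  set D := rootProd (fun i => w i 0 / w i 1) m
  have hD_deg := natDegree_rootProd (fun i => w i 0 / w i 1) m
  have hD_monic : D.Monic := monic_rootProd _ m
  ext F
  rw [Submodule.mem_map]
  constructor
  · intro hF
    obtain ⟨hF_monoid, hF_mult⟩ := (mem_linSys_cons_vertex hc).1 hF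
    obtain ⟨a, b, ha, hb, rfl⟩ := mem_monoidForms.1 hF_monoid
    have hdvd i := (hasMult_monoidForm_iff ha hb (hw i)).1 (hF_mult i)
    obtain ⟨a, rfl⟩ := rootProd_dvd ht fun i => (hdvd i).1
    obtain ⟨b, rfl⟩ := rootProd_dvd ht (a := b) fun i => by
      rw [← dvd_add_left ((hdvd i).1.mul_left _)]
      exact (pow_dvd_pow _ (Nat.le_succ (m i))).trans (hdvd i).2
    replace ha := natDegree_le_of_monic_mul hD_monic (ha.trans_eq (congrArg (· + e) hD_deg.symm))
    replace hb := natDegree_le_of_monic_mul hD_monic (e := e + 1)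
      (hb.trans_eq (by rw [hD_deg, add_assoc]))
    exact ⟨_, (monoidForm_rootProd_mem_linSys_iff hc hw ht ha hb).1 hF,
      (monoidForm_mul hD_deg.le ha hb).symm⟩
  · rintro ⟨G, hG, rfl⟩
    obtain ⟨a, b, ha, hb, rfl⟩ := mem_monoidForms.1 ((mem_linSys_cons_vertex hc).1 hG).1
    rw [LinearMap.mulLeft_apply, ← monoidForm_mul hD_deg.le ha hb]
    exact (monoidForm_rootProd_mem_linSys_iff hc hw ht ha hb).2 hG

end ResidualSystem

section Dimension

variable {n e : ℕ} {c : ℂ} {w : Fin n → Fin 3 → ℂ}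

theorem finrank_linSys_cons_vertex_succ (hc : c ≠ 0) (hw : ∀ i, w i 1 ≠ 0)
    (ht : Function.Injective fun i => w i 0 / w i 1) (m : Fin n → ℕ) (e : ℕ) :
    Module.finrank ℂ (linSys (Fin.cons (Pi.single 2 c) w : Fin (n + 1) → Fin 3 → ℂ)
        (∑ i, m i + e + 1) (Fin.cons (∑ i, m i + e) fun i => m i + 1)) =
      Module.finrank ℂ (linSys (Fin.cons (Pi.single 2 c) w : Fin (n + 1) → Fin 3 → ℂ) (e + 1)
        (Fin.cons e fun _ => 1)) := by
  rw [linSys_cons_vertex_eq_map hc hw ht]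
  refine (LinearEquiv.finrank_eq (Submodule.equivMapOfInjective _ ?_ _)).symm
  exact mul_right_injective₀ (mt (binForm_eq_zero_iff (natDegree_rootProd _ m).le).1
    (monic_rootProd _ m).ne_zero)

/-- Simultaneous evaluation of forms at the points `w i`. -/
noncomputable def pointEval (w : Fin n → Fin 3 → ℂ) :
    MvPolynomial (Fin 3) ℂ →ₗ[ℂ] Fin n → ℂ :=
  LinearMap.pi fun i => (aeval (w i)).toLinearMap

theorem pointEval_apply (F : MvPolynomial (Fin 3) ℂ) (i : Fin n) :
    pointEval w F i = eval (w i) F := by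
  simp [pointEval, aeval_eq_eval]

theorem linSys_cons_vertex_one (hc : c ≠ 0) (w : Fin n → Fin 3 → ℂ) (e : ℕ) :
    linSys (Fin.cons (Pi.single 2 c) w : Fin (n + 1) → Fin 3 → ℂ) (e + 1)
        (Fin.cons e fun _ => 1) =
      monoidForms ℂ e ⊓ LinearMap.ker (pointEval w) := by
  ext F
  simp [mem_linSys_cons_vertex hc, hasMult_one_iff, funext_iff, pointEval_apply]

theorem finrank_inf_ker_pointEval (hsurj : (monoidForms ℂ e).map (pointEval w) = ⊤) :
    Module.finrank ℂ ↥(monoidForms ℂ e ⊓ LinearMap.ker (pointEval w)) + n = 2 * e + 3 := by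
  have hrank := finrank_monoidForms ℂ e
  have : Module.Finite ℂ (monoidForms ℂ e) := Module.finite_of_finrank_pos (by omega)
  have hker := ((pointEval w).domRestrict (monoidForms ℂ e)).finrank_range_add_finrank_ker
  rw [LinearMap.range_domRestrict, hsurj, finrank_top, Module.finrank_fin_fun,
    LinearMap.ker_domRestrict, hrank, ← Submodule.finrank_map_subtype_eq,
    Submodule.map_comap_subtype] at hker
  rw [add_comm, hker]

end Dimension

section GeneralPosition

variable {R S : Type*} [CommRing R] [CommRing S] {n e : ℕ}

/-- The `j`-th element, for `j < 2 e + 3`, of the monomial basis of the module of monoidal forms of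
degree `e + 1`: first the monomials `X ^ j Y ^ (e + 1 - j)`, then the `Z X ^ i Y ^ (e - i)`. -/
noncomputable def monoidMonomial (R : Type*) [CommSemiring R] (e j : ℕ) :
    MvPolynomial (Fin 3) R :=
  if j ≤ e + 1 then X 0 ^ j * X 1 ^ (e + 1 - j)
  else X 2 * (X 0 ^ (j - (e + 2)) * X 1 ^ (e - (j - (e + 2))))

theorem monoidMonomial_mem_monoidForms {j : ℕ} (hj : j < 2 * e + 3) :
    monoidMonomial R e j ∈ monoidForms R e := by
  rw [mem_monoidForms, monoidMonomial]
  split_ifs with h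
  · refine ⟨0, Polynomial.X ^ j, by simp, (Polynomial.natDegree_X_pow_le _).trans h, ?_⟩
    rw [monoidForm_apply, map_zero, mul_zero, zero_add, binForm_X_pow h]
  · have hle : j - (e + 2) ≤ e := by omega
    refine ⟨Polynomial.X ^ (j - (e + 2)), 0, (Polynomial.natDegree_X_pow_le _).trans hle, by simp,
      ?_⟩
    rw [monoidForm_apply, map_zero, add_zero, binForm_X_pow hle]

/-- The matrix of values of the monomial basis of the monoidal forms at the points `w i`. -/
noncomputable def monoidMatrix (e : ℕ) (w : Fin n → Fin 3 → R) : Matrix (Fin n) (Fin n) R :=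
  Matrix.of fun i j => eval (w i) (monoidMonomial R e j)

theorem map_monoidMatrix (f : R →+* S) (w : Fin n → Fin 3 → R) :
    f.mapMatrix (monoidMatrix e w) = monoidMatrix e fun i j => f (w i j) := by
  ext i j
  simp only [monoidMatrix, monoidMonomial, RingHom.mapMatrix_apply, Matrix.map_apply,
    Matrix.of_apply]
  split_ifs <;> simp

theorem monoidMatrix_eq_vandermonde (x : Fin n → R) :
    monoidMatrix e (fun i => ![x i, 1, x i ^ (e + 2)]) = Matrix.vandermonde x := by
  ext i j
  simp only [monoidMatrix, monoidMonomial, Matrix.of_apply, Matrix.vandermonde_apply]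
  split_ifs with h
  · simp
  · simp [← pow_add, Nat.add_sub_cancel' (Nat.lt_of_not_ge h)]

theorem map_pointEval_monoidForms_eq_top {w : Fin n → Fin 3 → ℂ} (hn : n ≤ 2 * e + 3)
    (hdet : (monoidMatrix e w).det ≠ 0) : (monoidForms ℂ e).map (pointEval w) = ⊤ := by
  refine Submodule.eq_top_iff'.2 fun y => ?_
  obtain ⟨u, rfl⟩ := Matrix.mulVec_surjective_iff_isUnit.2
    ((Matrix.isUnit_iff_isUnit_det _).2 hdet.isUnit) y
  refine ⟨∑ j : Fin n, u j • monoidMonomial ℂ e j, Submodule.sum_mem _ fun j _ =>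
    Submodule.smul_mem _ _ (monoidMonomial_mem_monoidForms (j.2.trans_le hn)), ?_⟩
  ext i
  simp [pointEval_apply, Matrix.mulVec, dotProduct, monoidMatrix, mul_comm]

/-- The linear change of variables `(x, y, z) ↦ (c x - a z, c y - b z, z)`, which moves
`(a, b, c)` to `(0, 0, c)`. -/
def vertexMatrix (v : Fin 3 → R) : Matrix (Fin 3) (Fin 3) R :=
  !![v 2, 0, -v 0; 0, v 2, -v 1; 0, 0, 1]

theorem vertexMatrix_mulVec (v u : Fin 3 → R) :
    (vertexMatrix v).mulVec u = ![v 2 * u 0 - v 0 * u 2, v 2 * u 1 - v 1 * u 2, u 2] := by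
  ext i
  fin_cases i <;>
    simp [vertexMatrix, Matrix.mulVec, dotProduct, Fin.sum_univ_three, sub_eq_add_neg]

theorem vertexMatrix_mulVec_self (v : Fin 3 → R) :
    (vertexMatrix v).mulVec v = Pi.single 2 (v 2) := by
  rw [vertexMatrix_mulVec]
  ext i
  fin_cases i <;> simp [mul_comm]

theorem det_vertexMatrix (v : Fin 3 → R) : (vertexMatrix v).det = v 2 ^ 2 := by
  simp [vertexMatrix, Matrix.det_fin_three, sq]

/-- The points `p 1, …, p n` in the coordinates in which `p 0` is the vertex `(0, 0, p 0 2)`. -/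
def pointsFromVertex (p : Fin (n + 1) → Fin 3 → R) (i : Fin n) : Fin 3 → R :=
  (vertexMatrix (p 0)).mulVec (p i.succ)

theorem map_pointsFromVertex (f : R →+* S) (p : Fin (n + 1) → Fin 3 → R) (i : Fin n) (j : Fin 3) :
    f (pointsFromVertex p i j) = pointsFromVertex (fun i j => f (p i j)) i j := by
  simp only [pointsFromVertex, vertexMatrix_mulVec]
  fin_cases j <;> simp

theorem pointsFromVertex_cons (w : Fin n → Fin 3 → R) :
    pointsFromVertex (Fin.cons ![0, 0, 1] w) = w := by
  ext i j
  fin_cases j <;> simp [pointsFromVertex, vertexMatrix_mulVec]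

/-- The condition of general position on `p` is that this polynomial in the coordinates does not
vanish: in the coordinates `w` with vertex `p 0` the line `Y = 0` avoids the other points, the lines
joining them to `p 0` are distinct, and they impose independent conditions on monoidal forms of
degree `e + 1`. -/
noncomputable def genericity (e : ℕ) (p : Fin (n + 1) → Fin 3 → R) : R :=
  let w := pointsFromVertex p
  p 0 2 * (∏ i, w i 1) * (∏ ij ∈ Finset.univ.offDiag, (w ij.1 0 * w ij.2 1 - w ij.2 0 * w ij.1 1)) *
    (monoidMatrix e w).det

theorem map_genericity (f : R →+* S) (p : Fin (n + 1) → Fin 3 → R) :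
    f (genericity e p) = genericity e fun i j => f (p i j) := by
  simp only [genericity, map_mul, map_prod, map_sub, RingHom.map_det, map_monoidMatrix,
    map_pointsFromVertex]

theorem exists_genericity_ne_zero (n e : ℕ) :
    ∃ p : Fin (n + 1) → Fin 3 → ℂ, genericity e p ≠ 0 := by
  have hinj : Function.Injective fun i : Fin n => ((i : ℕ) : ℂ) :=
    Nat.cast_injective.comp Fin.val_injective
  refine ⟨Fin.cons ![0, 0, 1] fun i => ![((i : ℕ) : ℂ), 1, ((i : ℕ) : ℂ) ^ (e + 2)], ?_⟩
  simp only [genericity, pointsFromVertex_cons, monoidMatrix_eq_vandermonde]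
  refine mul_ne_zero (mul_ne_zero (by simp) (Finset.prod_ne_zero_iff.2 fun ij hij => ?_))
    (Matrix.det_vandermonde_ne_zero_iff.2 hinj)
  simpa [sub_eq_zero] using fun h => (Finset.mem_offDiag.1 hij).2.2 (Fin.ext h)

theorem finrank_linSys_add_of_genericity_ne_zero {p : Fin (n + 1) → Fin 3 → ℂ}
    (m : Fin n → ℕ) (hn : n ≤ 2 * e + 3) (hp : genericity e p ≠ 0) :
    Module.finrank ℂ (linSys p (∑ i, m i + e + 1) (Fin.cons (∑ i, m i + e) fun i => m i + 1)) + n =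
      2 * e + 3 := by
  obtain ⟨⟨⟨hc, hw⟩, hcross⟩, hdet⟩ := by
    simpa only [genericity, ne_eq, mul_eq_zero, not_or] using hp
  rw [← ne_eq, Finset.prod_ne_zero_iff] at hw hcross
  replace hw i := hw i (Finset.mem_univ i)
  have hslope : Function.Injective fun i => pointsFromVertex p i 0 / pointsFromVertex p i 1 := by
    intro i j hij
    by_contra hne
    refine hcross (i, j) (by simpa using hne) (sub_eq_zero.2 ?_)
    exact (div_eq_div_iff (hw i) (hw j)).1 hij
  have hmove : (fun i => (vertexMatrix (p 0)).mulVec (p i)) =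
      Fin.cons (Pi.single 2 (p 0 2)) (pointsFromVertex p) :=
    funext (Fin.cases (vertexMatrix_mulVec_self (p 0)) fun _ => rfl)
  have hunit : IsUnit (vertexMatrix (p 0)).det := det_vertexMatrix (p 0) ▸ (pow_ne_zero 2 hc).isUnit
  rw [← finrank_linSys_mulVec hunit, hmove, finrank_linSys_cons_vertex_succ hc hw hslope,
    linSys_cons_vertex_one hc, finrank_inf_ker_pointEval (map_pointEval_monoidForms_eq_top hn hdet)]

end GeneralPosition

theorem generically_finrank_linSys_add {n e : ℕ} (m : Fin n → ℕ) (hn : n ≤ 2 * e + 3) :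
    Generically (n + 1) fun p =>
      Module.finrank ℂ (linSys p (∑ i, m i + e + 1) (Fin.cons (∑ i, m i + e) fun i => m i + 1)) +
        n = 2 * e + 3 := by
  refine ⟨genericity e fun i j => X (i, j), ?_, fun p _ hp => ?_⟩
  · obtain ⟨p, hp⟩ := exists_genericity_ne_zero n e
    refine ne_of_apply_ne (eval fun x => p x.1 x.2) ?_
    simpa [map_genericity] using hp
  · exact finrank_linSys_add_of_genericity_ne_zero m hn (by simpa [map_genericity] using hp)

theorem Generically.mono {k : ℕ} {P Q : (Fin k → Fin 3 → ℂ) → Prop} (hP : Generically k P)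
    (h : ∀ p, P p → Q p) : Generically k Q := by
  obtain ⟨f, hf, hfP⟩ := hP
  exact ⟨f, hf, fun p hp hfp => h p (hfP p hp hfp)⟩

theorem virtDim_cons {n : ℕ} (k : ℕ) (m : Fin n → ℕ) :
    virtDim (k + 1) (Fin.cons k m) = 2 * (k + 1 : ℤ) - ∑ i, (m i : ℤ) * (m i + 1) / 2 := by
  have hsplit : ((k + 1 : ℕ) : ℤ) * ((k + 1 : ℕ) + 3) = (k : ℤ) * (k + 1) + 2 * (k + 1) * 2 := by
    push_cast
    ring
  rw [virtDim, Fin.sum_univ_succ, hsplit, Int.add_mul_ediv_right _ _ two_ne_zero]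
  simp only [Fin.cons_zero, Fin.cons_succ]
  ring

theorem generically_projDim {n d : ℕ} {m : Fin n → ℕ} (hm : ∀ i, 1 ≤ m i) (hn : 1 ≤ n)
    (hd : ∑ i, (2 * (m i : ℤ) - 1) ≤ 2 * d) :
    Generically (n + 1) fun p =>
      projDim p d (Fin.cons (d - 1) m) = 2 * (d : ℤ) - ∑ i, (2 * (m i : ℤ) - 1) := by
  obtain ⟨m, rfl⟩ : ∃ m' : Fin n → ℕ, m = fun i => m' i + 1 :=
    ⟨fun i => m i - 1, funext fun i => (Nat.sub_add_cancel (hm i)).symm⟩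
  have hsum : ∑ i, (2 * ((m i + 1 : ℕ) : ℤ) - 1) = 2 * (∑ i, m i : ℕ) + n := by
    simp only [Nat.cast_add, Nat.cast_one, mul_add, mul_one, Finset.sum_sub_distrib,
      Finset.sum_add_distrib, Finset.sum_const, Finset.card_univ, Fintype.card_fin,
      Int.nsmul_eq_mul, Nat.cast_sum, Finset.mul_sum]
    ring
  rw [hsum] at hd ⊢
  obtain ⟨e, rfl⟩ : ∃ e, d = ∑ i, m i + e + 1 := ⟨d - (∑ i, m i + 1), by omega⟩
  rw [Nat.add_sub_cancel]
  refine (generically_finrank_linSys_add (e := e) m (by omega)).mono fun p hrank => ?_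
  simp only [projDim]
  omega

theorem sum_two_mul_sub_one_lt {n : ℕ} {m : Fin n → ℕ} (hm : ∀ i, 1 ≤ m i) (h : ∃ i, 3 ≤ m i) :
    ∑ i, (2 * (m i : ℤ) - 1) < ∑ i, (m i : ℤ) * (m i + 1) / 2 := by
  obtain ⟨i, hi⟩ := h
  refine Finset.sum_lt_sum (fun j _ => ?_) ⟨i, Finset.mem_univ i, ?_⟩
  · have hfactor : 0 ≤ ((m j : ℤ) - 1) * (m j - 2) := by
      obtain hj | hj := (hm j).eq_or_lt
      · simp [← hj]
      · exact mul_nonneg (by omega) (by omega)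
    rw [Int.le_ediv_iff_mul_le two_pos]
    linarith
  · rw [← Int.add_one_le_iff, Int.le_ediv_iff_mul_le two_pos]
    nlinarith

theorem special_L_d_dsub1_sixn_general {n d : ℕ} {m : Fin n → ℕ} (hm : ∀ i, 1 ≤ m i)
    (hspecial : ∃ i, 3 ≤ m i) (hd : ∑ i, (2 * (m i : ℤ) - 1) ≤ 2 * d) :
    virtDim d (Fin.cons (d - 1) m : Fin (n + 1) → ℕ) =
        2 * (d : ℤ) - ∑ i, (m i : ℤ) * (m i + 1) / 2 ∧
    Generically (n + 1) fun p =>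
      projDim p d (Fin.cons (d - 1) m) = 2 * (d : ℤ) - ∑ i, (2 * (m i : ℤ) - 1) ∧
      projDim p d (Fin.cons (d - 1) m) >
        max (-1) (virtDim d (Fin.cons (d - 1) m : Fin (n + 1) → ℕ)) := by
  have hlt := sum_two_mul_sub_one_lt hm hspecial
  obtain ⟨i, -⟩ := hspecial
  have hsum_pos : 0 < ∑ i, (2 * (m i : ℤ) - 1) :=
    Finset.sum_pos (fun j _ => by have := hm j; omega) ⟨i, Finset.mem_univ i⟩
  have hvirt : virtDim d (Fin.cons (d - 1) m : Fin (n + 1) → ℕ) =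
      2 * (d : ℤ) - ∑ i, (m i : ℤ) * (m i + 1) / 2 := by
    obtain ⟨k, rfl⟩ := Nat.exists_eq_add_of_le' (show 1 ≤ d by omega)
    exact_mod_cast virtDim_cons k m
  refine ⟨hvirt, (generically_projDim hm i.pos hd).mono fun p hp => ⟨hp, ?_⟩⟩
  rw [hp, hvirt, gt_iff_lt, max_lt_iff]
  constructor <;> linarith

theorem special_L_d_dsub1_sixn (d n : ℕ) (hn : 1 ≤ n) (hd : 11 * n ≤ 2 * d) :
    virtDim d (qh n (d - 1)) = 2 * (d : ℤ) - 21 * n ∧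
    Generically (n + 1) (fun p =>
      projDim p d (qh n (d - 1)) = 2 * (d : ℤ) - 11 * n ∧
      projDim p d (qh n (d - 1)) > max (-1) (virtDim d (qh n (d - 1)))) := by
  have hqh : qh n (d - 1) = Fin.cons (d - 1) fun _ => 6 :=
    funext (Fin.cases rfl fun i => if_neg i.succ_ne_zero)
  have hsum : ∑ _ : Fin n, (2 * ((6 : ℕ) : ℤ) - 1) = 11 * n := by simp [mul_comm]
  have h := special_L_d_dsub1_sixn_general (n := n) (d := d) (m := fun _ => 6) (by simp)
    ⟨⟨0, hn⟩, by simp⟩ (by rw [hsum]; exact_mod_cast hd)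
  rw [hqh]
  simpa [mul_comm] using h
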